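/- Let I₀, …, I_m be ideals of ℂ[x₁, x₂], each of finite colength with monomial lexicographic initial ideal M_{Δⱼ} (lex order with x₁ > x₂), such that each S/Iⱼ is supported at a single point (λⱼ, 0) on the x₁-axis with the λⱼ pairwise distinct. Then the lexicographic initial ideal of I := I₀ ∩ ⋯ ∩ I_m is the monomial ideal M_Δ, where Δ is the C4 sum in the first direction Δ₀ +₁ ⋯ +₁ Δ_m. -/

import Mathlib

open MvPolynomial

def IsStandardSet (Δ : Set (ℕ × ℕ)) : Prop :=
  ∀ γ : ℕ × ℕ, γ ∉ Δ → ∀ δ : ℕ × ℕ, γ + δ ∉ Δ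

/-- The pair of exponents of a monomial of `ℂ[x₁, x₂]`, with `x₁ = X 0`, `x₂ = X 1`. -/
def expPair (d : Fin 2 →₀ ℕ) : ℕ × ℕ := (d 0, d 1)

/-- The set of lexicographic leading exponents (lex order with `x₁ > x₂`) of the nonzero
elements of an ideal `I ⊆ ℂ[x₁, x₂]`.  One has `in_lex(I) = M_Δ` exactly when this set is
the complement of the standard set `Δ`. -/
def leadSet (I : Ideal (MvPolynomial (Fin 2) ℂ)) : Set (ℕ × ℕ) :=
  {α | ∃ f ∈ I, f ≠ 0 ∧ (∃ d ∈ f.support, expPair d = α) ∧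
    ∀ d ∈ f.support, toLex (expPair d) ≤ toLex α}

/-- The vanishing set in `𝔸²(ℂ)` of an ideal of `ℂ[x₁, x₂]`. -/
def zeroSet (I : Ideal (MvPolynomial (Fin 2) ℂ)) : Set (ℂ × ℂ) :=
  {z | ∀ f ∈ I, MvPolynomial.eval ![z.1, z.2] f = 0}

/-!
Let `I` be an ideal of `A[x]` over a principal ideal domain `A` that contains a nonzero constant,
and let `L k` be the ideal of coefficients of `x ^ k` in the elements of `I` of degree at most `k`.
By a theorem of Lazard, the elements of `I` of degree at most `k` are divisible by the generator
of `L k`; dividing it out, `a ∈ L k` if and only if `(I : a)` contains a monic polynomial of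
degree `k`.

Take `A = ℂ[y]`. If `I` contains a power of `y`, then the length of the row of height `b` of its
lexicographic standard set is the smallest degree of a monic polynomial in `(I : y ^ b)`. By
Lazard's theorem once more, this polynomial generates the reduction of `(I : y ^ b)` modulo `y`.
Colon ideals commute with intersections and, for pairwise comaximal ideals, so does reduction
modulo `y`, the intersections being products. Hence the generators multiply and the row lengths,
which are their degrees, add up.
-/

open scoped Polynomial

section Ideal

theorem mem_radical_iInf_of_forall {R ι : Type*} [CommSemiring R] [Finite ι] {I : ι → Ideal R}
    {a : R} (h : ∀ j, a ∈ (I j).radical) : a ∈ (⨅ j, I j).radical := by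
  cases nonempty_fintype ι
  choose N hN using h
  exact ⟨∑ j, N j, Ideal.mem_iInf.2 fun j => (I j).pow_mem_of_pow_mem (hN j)
    (Finset.single_le_sum (fun _ _ => Nat.zero_le _) (Finset.mem_univ j))⟩

theorem isCoprime_comap_ringEquiv {R S : Type*} [CommSemiring R] [CommSemiring S] (e : R ≃+* S)
    {I J : Ideal S} (h : IsCoprime I J) : IsCoprime (I.comap e) (J.comap e) := by
  rw [← Ideal.map_symm, ← Ideal.map_symm]
  exact h.map (Ideal.mapHom _)

end Ideal

section LeadingCoeff

variable {R : Type*} [CommRing R]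

theorem mem_leadingCoeffNth_iff_coeff {I : Ideal R[X]} {k : ℕ} {c : R} :
    c ∈ I.leadingCoeffNth k ↔ ∃ F ∈ I, F.natDegree ≤ k ∧ F.coeff k = c := by
  simp only [Ideal.leadingCoeffNth, Ideal.degreeLE, Submodule.mem_map, Submodule.mem_inf,
    Polynomial.mem_degreeLE, Polynomial.lcoeff_apply, Polynomial.natDegree_le_iff_degree_le,
    I.mem_ofPolynomial]
  grind

theorem exists_pow_mem_leadingCoeffNth {I : Ideal R[X]} {p : R}
    (h : Polynomial.C p ∈ I.radical) (k : ℕ) : ∃ N, p ^ N ∈ I.leadingCoeffNth k := by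
  obtain ⟨N, hN⟩ := h
  refine ⟨N, I.leadingCoeffNth_mono k.zero_le ((I.mem_leadingCoeffNth_zero _).2 ?_)⟩
  rwa [Polynomial.C_pow]

theorem leadingCoeffNth_ne_bot [IsReduced R] {I : Ideal R[X]} {p : R} (hp : p ≠ 0)
    (h : Polynomial.C p ∈ I.radical) (k : ℕ) : I.leadingCoeffNth k ≠ ⊥ := by
  obtain ⟨N, hN⟩ := exists_pow_mem_leadingCoeffNth h k
  exact (Submodule.ne_bot_iff _).2 ⟨p ^ N, hN, pow_ne_zero N hp⟩

theorem mem_leadingCoeffNth_natDegree_of_mem_colon {I : Ideal R[X]} {c : R} {g : R[X]}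
    (hgm : g.Monic) (hg : g ∈ I.colon {Polynomial.C c}) : c ∈ I.leadingCoeffNth g.natDegree := by
  rw [Submodule.mem_colon_singleton, smul_eq_mul] at hg
  exact mem_leadingCoeffNth_iff_coeff.2
    ⟨_, hg, Polynomial.natDegree_mul_C_le _ _, by simp [hgm]⟩

theorem exists_forall_mem_leadingCoeffNth_iff {I : Ideal R[X]} {k₀ : ℕ} {c : R}
    (h : c ∈ I.leadingCoeffNth k₀) : ∃ r, ∀ k, c ∈ I.leadingCoeffNth k ↔ r ≤ k := by
  classical
  have hex : ∃ k, c ∈ I.leadingCoeffNth k := ⟨k₀, h⟩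
  exact ⟨Nat.find hex, fun k => ⟨Nat.find_min' hex,
    fun hk => I.leadingCoeffNth_mono hk (Nat.find_spec hex)⟩⟩

end LeadingCoeff

section ColonReduction

variable {A : Type*} [CommRing A] {p : A} {b : ℕ}

/-- The reduction modulo `p` of the colon ideal `(I : p ^ b)` in `A[X]`. For `A = K[y]`,
`p = y` and `I` containing a power of `y`, it is generated by a polynomial whose degree is the
length of the row of height `b` in the lexicographic standard set of `I`. -/
noncomputable def colonReduction (I : Ideal A[X]) (p : A) (b : ℕ) : Ideal (A ⧸ Ideal.span {p})[X] :=
  (I.colon {Polynomial.C (p ^ b)}).map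
    (Polynomial.mapRingHom (Ideal.Quotient.mk (Ideal.span {p})))

theorem isCoprime_colonReduction {I J : Ideal A[X]} (h : IsCoprime I J) :
    IsCoprime (colonReduction I p b) (colonReduction J p b) := by
  have hcolon : IsCoprime (I.colon {Polynomial.C (p ^ b)}) (J.colon {Polynomial.C (p ^ b)}) :=
    Ideal.isCoprime_iff_sup_eq.2 <|
      eq_top_mono (sup_le_sup Ideal.le_colon Ideal.le_colon) h.sup_eq
  exact hcolon.map (Ideal.mapHom _)

theorem colonReduction_iInf {ι : Type*} [Finite ι] {I : ι → Ideal A[X]}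
    (hI : Pairwise (Function.onFun IsCoprime I)) :
    colonReduction (⨅ j, I j) p b = ⨅ j, colonReduction (I j) p b := by
  cases nonempty_fintype ι
  refine le_antisymm (le_iInf fun j => Ideal.map_mono ?_) ?_
  · exact Submodule.colon_mono (iInf_le I j) subset_rfl
  calc ⨅ j, colonReduction (I j) p b = ∏ j, colonReduction (I j) p b := by
        simpa using (Ideal.prod_eq_iInf_of_pairwise_isCoprime (s := Finset.univ)
          fun i _ j _ hij => isCoprime_colonReduction (p := p) (b := b) (hI hij)).symm
    _ = (∏ j, (I j).colon {Polynomial.C (p ^ b)}).map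
          (Polynomial.mapRingHom (Ideal.Quotient.mk (Ideal.span {p}))) :=
        (map_prod (Ideal.mapHom _) _ _).symm
    _ ≤ colonReduction (⨅ j, I j) p b := Ideal.map_mono <| by
        rw [Submodule.iInf_colon]
        exact le_iInf fun j => Ideal.prod_le_inf.trans (Finset.inf_le (Finset.mem_univ j))

end ColonReduction

section PrincipalIdealDomain

variable {A : Type*} [CommRing A] [IsPrincipalIdealRing A]

theorem exists_mem_leadingCoeffNth_eq_span_coeff {I : Ideal A[X]} (hI : I.leadingCoeffNth 0 ≠ ⊥)
    (k : ℕ) : ∃ G ∈ I, G.natDegree ≤ k ∧ G.coeff k ≠ 0 ∧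
      I.leadingCoeffNth k = Ideal.span {G.coeff k} := by
  obtain ⟨d, hd⟩ : ∃ d, I.leadingCoeffNth k = Ideal.span {d} :=
    (IsPrincipalIdealRing.principal _).principal
  obtain ⟨G, hG, hGk, rfl⟩ :=
    mem_leadingCoeffNth_iff_coeff.1 (hd.ge (Ideal.mem_span_singleton_self d))
  refine ⟨G, hG, hGk, fun h0 => hI ?_, hd⟩
  rw [h0, Ideal.span_singleton_zero] at hd
  exact le_bot_iff.1 (hd ▸ I.leadingCoeffNth_mono k.zero_le)

variable [IsDomain A]

theorem C_dvd_of_leadingCoeffNth_le_span {I : Ideal A[X]} (hI : I.leadingCoeffNth 0 ≠ ⊥)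
    {k : ℕ} {a : A} (ha : I.leadingCoeffNth k ≤ Ideal.span {a}) {F : A[X]} (hF : F ∈ I)
    (hFk : F.natDegree ≤ k) : Polynomial.C a ∣ F := by
  have hFa : a ∣ F.coeff k :=
    Ideal.mem_span_singleton.1 (ha (mem_leadingCoeffNth_iff_coeff.2 ⟨F, hF, hFk, rfl⟩))
  induction k generalizing a F with
  | zero =>
    rw [Polynomial.eq_C_of_natDegree_le_zero hFk]
    exact map_dvd Polynomial.C hFa
  | succ k ih =>
    obtain ⟨c, hc⟩ := hFa
    obtain ⟨G, hG, hGk, hG0, hspan⟩ := exists_mem_leadingCoeffNth_eq_span_coeff hI k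
    obtain ⟨e, he⟩ : a ∣ G.coeff k := Ideal.mem_span_singleton.1 <| ha <|
      I.leadingCoeffNth_mono k.le_succ <| hspan.ge <| Ideal.mem_span_singleton_self _
    have ih' {H : A[X]} (hH : H ∈ I) (hHk : H.natDegree ≤ k) :
        Polynomial.C (G.coeff k) ∣ H :=
      ih hspan.le hH hHk <| Ideal.mem_span_singleton.1 <|
        hspan.le <| mem_leadingCoeffNth_iff_coeff.2 ⟨H, hH, hHk, rfl⟩
    -- Cancelling the top coefficient of `F` against that of `X * G` lowers the degree.
    have hdiff : Polynomial.C (G.coeff k) ∣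
        Polynomial.C e * F - Polynomial.C c * (Polynomial.X * G) := by
      refine ih' (I.sub_mem (I.mul_mem_left _ hF)
        (I.mul_mem_left _ (I.mul_mem_left _ hG))) (Polynomial.natDegree_le_pred (n := k + 1) ?_ ?_)
      · have hXG : (Polynomial.X * G).natDegree ≤ k + 1 :=
          add_comm 1 k ▸ Polynomial.natDegree_mul_le_of_le Polynomial.natDegree_X_le hGk
        exact (Polynomial.natDegree_sub_le_of_le
          ((Polynomial.natDegree_C_mul_le _ _).trans hFk)
          ((Polynomial.natDegree_C_mul_le _ _).trans hXG)).trans (max_self _).le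
      · simp only [Polynomial.coeff_sub, Polynomial.coeff_C_mul, Polynomial.coeff_X_mul, hc, he]
        ring
    have heF : Polynomial.C e * Polynomial.C a ∣ Polynomial.C e * F := by
      rw [← Polynomial.C_mul, mul_comm e a, ← he]
      exact (dvd_sub_left (((ih' hG hGk).mul_left _).mul_left _)).1 hdiff
    have he0 : e ≠ 0 := right_ne_zero_of_mul (he ▸ hG0)
    exact (mul_dvd_mul_iff_left (Polynomial.C_ne_zero.2 he0)).1 heF

theorem exists_monic_mem_colon_of_mem_leadingCoeffNth {I : Ideal A[X]}
    (hI : I.leadingCoeffNth 0 ≠ ⊥) {k : ℕ} {a : A} (ha : a ∈ I.leadingCoeffNth k) :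
    ∃ g ∈ I.colon {Polynomial.C a}, g.Monic ∧ g.natDegree = k := by
  obtain ⟨F, hF, hFk, hF0, hspan⟩ := exists_mem_leadingCoeffNth_eq_span_coeff hI k
  obtain ⟨e, rfl⟩ : F.coeff k ∣ a := Ideal.mem_span_singleton.1 (hspan.le ha)
  obtain ⟨g, hg⟩ := C_dvd_of_leadingCoeffNth_le_span hI hspan.le hF hFk
  have hgk : g.natDegree ≤ k := by
    rwa [hg, Polynomial.natDegree_C_mul hF0] at hFk
  have hg1 : g.coeff k = 1 := by
    apply mul_left_cancel₀ hF0
    rw [mul_one, ← Polynomial.coeff_C_mul, ← hg]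
  refine ⟨g, ?_, Polynomial.monic_of_natDegree_le_of_coeff_eq_one k hgk hg1,
    Polynomial.natDegree_eq_of_le_of_coeff_ne_zero hgk (hg1 ▸ one_ne_zero)⟩
  rw [Submodule.mem_colon_singleton, smul_eq_mul, Polynomial.C_mul, ← mul_assoc, mul_comm g, ← hg]
  exact I.mul_mem_right _ hF

theorem le_span_pow_succ_of_pow_notMem {J : Ideal A} {p : A} {N b : ℕ} (hp : Prime p)
    (hN : p ^ N ∈ J) (hb : p ^ b ∉ J) : J ≤ Ideal.span {p ^ (b + 1)} := by
  obtain ⟨d, rfl⟩ : ∃ d, J = Ideal.span {d} := (IsPrincipalIdealRing.principal J).principal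
  rw [Ideal.mem_span_singleton] at hN hb
  obtain ⟨i, -, hi⟩ := (dvd_prime_pow hp N).1 hN
  rw [Ideal.span_singleton_le_span_singleton, hi.dvd_iff_dvd_right]
  rw [hi.dvd_iff_dvd_left] at hb
  exact pow_dvd_pow p (not_le.1 fun h => hb (pow_dvd_pow p h))

theorem colonReduction_eq_span {I : Ideal A[X]} {p : A} {b : ℕ} (hp : Prime p)
    (hpI : Polynomial.C p ∈ I.radical) {g : A[X]} (hgm : g.Monic)
    (hg : g ∈ I.colon {Polynomial.C (p ^ b)})
    (hmin : ∀ k, p ^ b ∈ I.leadingCoeffNth k → g.natDegree ≤ k) :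
    colonReduction I p b = Ideal.span {g.map (Ideal.Quotient.mk (Ideal.span {p}))} := by
  refine le_antisymm (Ideal.map_le_iff_le_comap.2 fun G hG => ?_)
    ((Ideal.span_singleton_le_iff_mem _).2 (Ideal.mem_map_of_mem _ hg))
  rw [Ideal.mem_comap, Ideal.mem_span_singleton, Polynomial.coe_mapRingHom]
  by_cases h1 : g = 1
  · simp [h1]
  have hdeg : (G %ₘ g).natDegree < g.natDegree := Polynomial.natDegree_modByMonic_lt G hgm h1
  have hrem : G %ₘ g ∈ I.colon {Polynomial.C (p ^ b)} := by
    rw [Polynomial.modByMonic_eq_sub_mul_div]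
    exact Ideal.sub_mem _ hG (Ideal.mul_mem_right _ _ hg)
  obtain ⟨N, hN⟩ := exists_pow_mem_leadingCoeffNth hpI (G %ₘ g).natDegree
  have hle : I.leadingCoeffNth (G %ₘ g).natDegree ≤ Ideal.span {p ^ (b + 1)} :=
    le_span_pow_succ_of_pow_notMem hp hN fun h => (hmin _ h).not_gt hdeg
  have hdvd : Polynomial.C p ∣ G %ₘ g := by
    have := C_dvd_of_leadingCoeffNth_le_span
      (leadingCoeffNth_ne_bot hp.ne_zero hpI 0) hle
      (Submodule.mem_colon_singleton.1 hrem) (Polynomial.natDegree_mul_C_le _ _)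
    rw [smul_eq_mul, mul_comm, pow_succ, Polynomial.C_mul] at this
    exact (mul_dvd_mul_iff_left (Polynomial.C_ne_zero.2 (pow_ne_zero b hp.ne_zero))).1 this
  have hrem0 : (G %ₘ g).map (Ideal.Quotient.mk (Ideal.span {p})) = 0 := by
    obtain ⟨q, hq⟩ := hdvd
    rw [hq, Polynomial.map_mul, Polynomial.map_C,
      Ideal.Quotient.eq_zero_iff_mem.2 (Ideal.mem_span_singleton_self p), Polynomial.C_0, zero_mul]
  rw [← Polynomial.modByMonic_add_div G g, Polynomial.map_add, hrem0, zero_add,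
    Polynomial.map_mul]
  exact dvd_mul_right _ _

theorem exists_monic_colonReduction_eq_span {I : Ideal A[X]} {p : A} {b r : ℕ} (hp : Prime p)
    (hpI : Polynomial.C p ∈ I.radical) (hr : ∀ k, p ^ b ∈ I.leadingCoeffNth k ↔ r ≤ k) :
    ∃ g : A[X], g.Monic ∧ g.natDegree = r ∧
      colonReduction I p b = Ideal.span {g.map (Ideal.Quotient.mk (Ideal.span {p}))} := by
  obtain ⟨g, hg, hgm, rfl⟩ := exists_monic_mem_colon_of_mem_leadingCoeffNth
    (leadingCoeffNth_ne_bot hp.ne_zero hpI 0) ((hr r).2 le_rfl)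
  exact ⟨g, hgm, rfl, colonReduction_eq_span hp hpI hgm hg fun k => (hr k).1⟩

theorem mem_leadingCoeffNth_iInf_sum {ι : Type*} [Fintype ι] {I : ι → Ideal A[X]}
    (hI : ∀ j, (I j).leadingCoeffNth 0 ≠ ⊥) {a : A} {r : ι → ℕ}
    (ha : ∀ j, a ∈ (I j).leadingCoeffNth (r j)) :
    a ∈ (⨅ j, I j).leadingCoeffNth (∑ j, r j) := by
  choose g hg hgm hgr using fun j => exists_monic_mem_colon_of_mem_leadingCoeffNth (hI j) (ha j)
  have hdeg : (∏ j, g j).natDegree = ∑ j, r j := by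
    rw [Polynomial.natDegree_prod_of_monic _ _ fun j _ => hgm j]
    exact Finset.sum_congr rfl fun j _ => hgr j
  rw [← hdeg]
  refine mem_leadingCoeffNth_natDegree_of_mem_colon
    (Polynomial.monic_prod_of_monic _ _ fun j _ => hgm j) ?_
  rw [Submodule.iInf_colon]
  exact Ideal.mem_iInf.2 fun j =>
    Ideal.mem_of_dvd _ (Finset.dvd_prod_of_mem g (Finset.mem_univ j)) (hg j)

theorem pow_mem_leadingCoeffNth_iInf_iff {ι : Type*} [Fintype ι] {I : ι → Ideal A[X]} {p : A}
    {b : ℕ} {r : ι → ℕ} (hp : Prime p) (hcop : Pairwise (Function.onFun IsCoprime I))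
    (hpI : ∀ j, Polynomial.C p ∈ (I j).radical)
    (hr : ∀ j k, p ^ b ∈ (I j).leadingCoeffNth k ↔ r j ≤ k) (k : ℕ) :
    p ^ b ∈ (⨅ j, I j).leadingCoeffNth k ↔ ∑ j, r j ≤ k := by
  obtain ⟨s, hs⟩ := exists_forall_mem_leadingCoeffNth_iff <| mem_leadingCoeffNth_iInf_sum
    (fun j => leadingCoeffNth_ne_bot hp.ne_zero (hpI j) 0) fun j => (hr j _).2 le_rfl
  obtain ⟨G, hGm, hGs, hGspan⟩ :=
    exists_monic_colonReduction_eq_span hp (mem_radical_iInf_of_forall hpI) hs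
  choose g hgm hgr hgspan using fun j => exists_monic_colonReduction_eq_span hp (hpI j) (hr j)
  let π := Ideal.Quotient.mk (Ideal.span {p})
  have : (Ideal.span {p}).IsPrime := (Ideal.span_singleton_prime hp.ne_zero).2 hp
  have hspan : Ideal.span {G.map π} = Ideal.span {∏ j, (g j).map π} := by
    rw [← Ideal.iInf_span_singleton, ← hGspan, colonReduction_iInf hcop, iInf_congr hgspan]
    intro i j hij
    rw [← Ideal.isCoprime_span_singleton_iff, ← hgspan, ← hgspan]
    exact isCoprime_colonReduction (hcop hij)
  have hG : G.map π = ∏ j, (g j).map π :=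
    Polynomial.eq_of_monic_of_associated (hGm.map π)
      (Polynomial.monic_prod_of_monic _ _ fun j _ => (hgm j).map π)
      (Ideal.span_singleton_eq_span_singleton.1 hspan)
  have hsum : s = ∑ j, r j := by
    rw [← hGs, ← hGm.natDegree_map π, hG,
      Polynomial.natDegree_prod_of_monic _ _ fun j _ => (hgm j).map π]
    exact Finset.sum_congr rfl fun j _ => ((hgm j).natDegree_map π).trans (hgr j)
  rw [hs, hsum]

end PrincipalIdealDomain

section Bivariate

theorem isGreatest_toLex_image_iff {R : Type*} [Semiring R] {F : R[X][X]} {k b : ℕ} :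
    IsGreatest (toLex '' {α : ℕ × ℕ | (F.coeff α.1).coeff α.2 ≠ 0}) (toLex (k, b)) ↔
      F.natDegree ≤ k ∧ F.coeff k ≠ 0 ∧ (F.coeff k).natDegree = b := by
  simp only [IsGreatest, mem_upperBounds, Set.mem_ofPred_eq, Set.forall_mem_image,
    toLex.injective.mem_set_image, Prod.forall, Prod.Lex.toLex_le_toLex]
  constructor
  · rintro ⟨hkb, hle⟩
    refine ⟨Polynomial.natDegree_le_iff_coeff_eq_zero.2 fun i hi => ?_, fun h => hkb (by simp [h]),
      le_antisymm (Polynomial.natDegree_le_iff_coeff_eq_zero.2 fun j hj => ?_)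
        (Polynomial.le_natDegree_of_ne_zero hkb)⟩
    · ext j
      by_contra hij
      have := hle i j hij
      omega
    · by_contra hkj
      have := hle k j hkj
      omega
  · rintro ⟨hFk, hk0, rfl⟩
    refine ⟨Polynomial.leadingCoeff_ne_zero.2 hk0, fun i j hij => ?_⟩
    have hik : i ≤ k :=
      (Polynomial.le_natDegree_of_ne_zero fun h => hij (by simp [h])).trans hFk
    rcases hik.lt_or_eq with hlt | rfl
    · exact .inl hlt
    · exact .inr ⟨rfl, Polynomial.le_natDegree_of_ne_zero hij⟩

variable {R : Type*} [CommSemiring R]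

/-- The isomorphism `R[x₂][x₁] ≃ R[x₁, x₂]`. The outer variable is the lexicographically larger
one, so that the lexicographic leading term can be read off from the leading coefficient. -/
noncomputable def bivariateEquiv (R : Type*) [CommSemiring R] :
    R[X][X] ≃ₐ[R] MvPolynomial (Fin 2) R :=
  Polynomial.Bivariate.swap.trans (Polynomial.Bivariate.equivMvPolynomial R)

theorem bivariateEquiv_X : bivariateEquiv R Polynomial.X = MvPolynomial.X 0 := by
  simp [bivariateEquiv, Polynomial.Bivariate.swap_Y]

theorem bivariateEquiv_C_X :
    bivariateEquiv R (Polynomial.C Polynomial.X) = MvPolynomial.X 1 := by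
  simp [bivariateEquiv, Polynomial.Bivariate.swap_X]

theorem bivariateEquiv_C_C (a : R) :
    bivariateEquiv R (Polynomial.C (Polynomial.C a)) = MvPolynomial.C a := by
  simp [bivariateEquiv, Polynomial.Bivariate.swap_C_C]

theorem bivariateEquiv_monomial (n m : ℕ) (a : R) :
    bivariateEquiv R (Polynomial.monomial n (Polynomial.monomial m a)) =
      MvPolynomial.monomial (Finsupp.single 0 n + Finsupp.single 1 m) a := by
  rw [← Polynomial.C_mul_X_pow_eq_monomial, ← Polynomial.C_mul_X_pow_eq_monomial]
  simp only [map_mul, map_pow, bivariateEquiv_X, bivariateEquiv_C_X, bivariateEquiv_C_C]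
  rw [mul_assoc, mul_comm (_ ^ m), MvPolynomial.X_pow_eq_monomial, MvPolynomial.X_pow_eq_monomial,
    MvPolynomial.monomial_mul, MvPolynomial.C_mul_monomial, mul_one, mul_one]

theorem C_X_mem_radical_comap_bivariateEquiv {I : Ideal (MvPolynomial (Fin 2) R)}
    (hI : MvPolynomial.X 1 ∈ I.radical) :
    Polynomial.C Polynomial.X ∈ (I.comap (bivariateEquiv R)).radical := by
  rwa [← Ideal.comap_radical, Ideal.mem_comap, bivariateEquiv_C_X]

theorem coeff_bivariateEquiv (F : R[X][X]) (d : Fin 2 →₀ ℕ) :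
    (bivariateEquiv R F).coeff d = (F.coeff (d 0)).coeff (d 1) := by
  induction F using Polynomial.induction_on' with
  | add F G hF hG => simp [hF, hG]
  | monomial n p =>
    induction p using Polynomial.induction_on' with
    | add p q hp hq => simp [hp, hq]
    | monomial m a =>
      have hd : Finsupp.single 0 n + Finsupp.single 1 m = d ↔ n = d 0 ∧ m = d 1 := by
        simp [Finsupp.ext_iff, Fin.forall_fin_two]
      rw [bivariateEquiv_monomial, MvPolynomial.coeff_monomial, Polynomial.coeff_monomial]
      split_ifs <;> simp_all [Polynomial.coeff_monomial]

theorem expPair_image_support_bivariateEquiv (F : R[X][X]) :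
    expPair '' (bivariateEquiv R F).support = {α | (F.coeff α.1).coeff α.2 ≠ 0} := by
  ext ⟨i, j⟩
  simp only [Set.mem_image, Finset.mem_coe, MvPolynomial.mem_support_iff, coeff_bivariateEquiv,
    expPair, Set.mem_ofPred_eq, Prod.mk.injEq]
  constructor
  · rintro ⟨d, hd, rfl, rfl⟩
    exact hd
  · intro hij
    exact ⟨Finsupp.equivFunOnFinite.symm ![i, j], by simpa using hij, by simp⟩

end Bivariate

section LeadSet

theorem mem_leadSet_iff {I : Ideal (MvPolynomial (Fin 2) ℂ)} {k b : ℕ} :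
    (k, b) ∈ leadSet I ↔
      ∃ c ∈ (I.comap (bivariateEquiv ℂ)).leadingCoeffNth k, c ≠ 0 ∧ c.natDegree = b := by
  calc (k, b) ∈ leadSet I ↔ ∃ f ∈ I,
        IsGreatest (toLex '' (expPair '' (f.support : Set (Fin 2 →₀ ℕ)))) (toLex (k, b)) := by
        simp only [leadSet, IsGreatest, mem_upperBounds, Set.forall_mem_image,
          toLex.injective.mem_set_image]
        refine exists_congr fun f => and_congr_right fun _ => and_iff_right_of_imp ?_
        rintro ⟨⟨d, hd, -⟩, -⟩ rfl
        simp at hd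
    _ ↔ ∃ F ∈ I.comap (bivariateEquiv ℂ),
        F.natDegree ≤ k ∧ F.coeff k ≠ 0 ∧ (F.coeff k).natDegree = b := by
        simp only [(bivariateEquiv ℂ).surjective.exists, expPair_image_support_bivariateEquiv,
          isGreatest_toLex_image_iff, Ideal.mem_comap]
    _ ↔ _ := by simp only [mem_leadingCoeffNth_iff_coeff]; grind

theorem mem_leadSet_iff_pow_mem {I : Ideal (MvPolynomial (Fin 2) ℂ)}
    (hI : MvPolynomial.X 1 ∈ I.radical) {k b : ℕ} :
    (k, b) ∈ leadSet I ↔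
      Polynomial.X ^ b ∈ (I.comap (bivariateEquiv ℂ)).leadingCoeffNth k := by
  rw [mem_leadSet_iff]
  constructor
  · rintro ⟨c, hc, hc0, rfl⟩
    by_contra hb
    obtain ⟨N, hN⟩ := exists_pow_mem_leadingCoeffNth (C_X_mem_radical_comap_bivariateEquiv hI) k
    have hdvd := Ideal.mem_span_singleton.1
      (le_span_pow_succ_of_pow_notMem Polynomial.prime_X hN hb hc)
    have := Polynomial.natDegree_le_of_dvd hdvd hc0
    simp at this
  · exact fun h => ⟨_, h, pow_ne_zero b Polynomial.X_ne_zero, Polynomial.natDegree_X_pow b⟩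

end LeadSet

section ZeroSet

variable {I J : Ideal (MvPolynomial (Fin 2) ℂ)}

theorem mem_radical_iff_forall_mem_zeroSet {f : MvPolynomial (Fin 2) ℂ} :
    f ∈ I.radical ↔ ∀ z ∈ zeroSet I, MvPolynomial.eval ![z.1, z.2] f = 0 := by
  rw [← MvPolynomial.vanishingIdeal_zeroLocus_eq_radical (K := ℂ),
    MvPolynomial.mem_vanishingIdeal_iff, (finTwoArrowEquiv ℂ).forall_congr_left]
  simp only [MvPolynomial.mem_zeroLocus_iff, zeroSet, MvPolynomial.aeval_eq_eval,
    Set.mem_ofPred_eq, finTwoArrowEquiv_symm_apply]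

theorem isCoprime_of_disjoint_zeroSet (h : Disjoint (zeroSet I) (zeroSet J)) : IsCoprime I J := by
  rw [Ideal.isCoprime_iff_sup_eq, ← Ideal.radical_eq_top, Ideal.eq_top_iff_one,
    mem_radical_iff_forall_mem_zeroSet]
  intro z hz
  exact (Set.disjoint_left.1 h (fun f hf => hz f (Ideal.mem_sup_left hf))
    fun f hf => hz f (Ideal.mem_sup_right hf)).elim

end ZeroSet

section Rows

theorem ncard_setOf_mem_snd_eq {X : Type*} {Δ : Set (ℕ × X)} {b : X} {r : ℕ}
    (h : ∀ k, (k, b) ∈ Δ ↔ k < r) : {β ∈ Δ | β.2 = b}.ncard = r := by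
  have himage : {β ∈ Δ | β.2 = b} = (·, b) '' Set.Iio r := by
    ext ⟨k, x⟩
    simp only [Set.mem_ofPred_eq, Set.mem_image, Set.mem_Iio, Prod.mk.injEq, ← h]
    constructor
    · rintro ⟨hk, rfl⟩
      exact ⟨k, hk, rfl, rfl⟩
    · rintro ⟨i, hi, rfl, rfl⟩
      exact ⟨hi, rfl⟩
  rw [himage, Set.ncard_image_of_injective _ (Prod.mk_left_injective b)]
  simp

theorem exists_mk_notMem_of_finite {κ X : Type*} [Infinite κ] {Δ : Set (κ × X)} (h : Δ.Finite)
    (b : X) : ∃ k, (k, b) ∉ Δ :=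
  (h.preimage (Prod.mk_left_injective b).injOn).exists_notMem

end Rows

section Intersection

theorem exists_forall_mem_leadSet_iff {I : Ideal (MvPolynomial (Fin 2) ℂ)} {k₀ b : ℕ}
    (hI : MvPolynomial.X 1 ∈ I.radical) (h : (k₀, b) ∈ leadSet I) :
    ∃ r, ∀ k, (k, b) ∈ leadSet I ↔ r ≤ k := by
  simp only [mem_leadSet_iff_pow_mem hI] at h ⊢
  exact exists_forall_mem_leadingCoeffNth_iff h

theorem mem_leadSet_iInf_iff {ι : Type*} [Fintype ι] {I : ι → Ideal (MvPolynomial (Fin 2) ℂ)}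
    {b : ℕ} {r : ι → ℕ} (hcop : Pairwise (Function.onFun IsCoprime I))
    (hI : ∀ j, MvPolynomial.X 1 ∈ (I j).radical)
    (hr : ∀ j k, (k, b) ∈ leadSet (I j) ↔ r j ≤ k) (k : ℕ) :
    (k, b) ∈ leadSet (⨅ j, I j) ↔ ∑ j, r j ≤ k := by
  simp only [mem_leadSet_iff_pow_mem (hI _)] at hr
  rw [mem_leadSet_iff_pow_mem (mem_radical_iInf_of_forall hI), Ideal.comap_iInf]
  exact pow_mem_leadingCoeffNth_iInf_iff Polynomial.prime_X
    (fun i j hij => isCoprime_comap_ringEquiv (bivariateEquiv ℂ).toRingEquiv (hcop hij))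
    (fun j => C_X_mem_radical_comap_bivariateEquiv (hI j)) hr k

theorem stmt13_general {ι : Type*} [Fintype ι] (I : ι → Ideal (MvPolynomial (Fin 2) ℂ))
    (Δ : ι → Set (ℕ × ℕ)) (hfin : ∀ j, (Δ j).Finite) (hin : ∀ j, leadSet (I j) = (Δ j)ᶜ)
    (hsupp : ∀ j, ∀ z ∈ zeroSet (I j), z.2 = 0)
    (hdisj : Pairwise (Function.onFun Disjoint fun j => zeroSet (I j))) :
    leadSet (⨅ j, I j) = {α : ℕ × ℕ | α.1 < ∑ j, ({β ∈ Δ j | β.2 = α.2}).ncard}ᶜ := by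
  have hI (j : ι) : MvPolynomial.X 1 ∈ (I j).radical :=
    mem_radical_iff_forall_mem_zeroSet.2 fun z hz => by simpa using hsupp j z hz
  have hcop : Pairwise (Function.onFun IsCoprime I) := fun i j hij =>
    isCoprime_of_disjoint_zeroSet (hdisj hij)
  ext ⟨k, b⟩
  have hrow (j : ι) : ∃ r, ∀ k, (k, b) ∈ leadSet (I j) ↔ r ≤ k := by
    obtain ⟨k₀, hk₀⟩ := exists_mk_notMem_of_finite (hfin j) b
    exact exists_forall_mem_leadSet_iff (hI j) ((hin j).ge hk₀)
  choose r hr using hrow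
  have hcard (j : ι) : {β ∈ Δ j | β.2 = b}.ncard = r j := ncard_setOf_mem_snd_eq fun k => by
    rw [← not_iff_not, ← Set.mem_compl_iff, ← hin, hr, not_lt]
  simp only [mem_leadSet_iInf_iff hcop hI hr, Set.mem_compl_iff, Set.mem_ofPred_eq, hcard, not_lt]

end Intersection

/-- Proposition: C4 addition in the first direction computes the lex Gröbner deformation
of an intersection of ideals supported at distinct points of the x₁-axis. -/
theorem stmt13 (m : ℕ) (I : Fin (m + 1) → Ideal (MvPolynomial (Fin 2) ℂ))
    (Δ : Fin (m + 1) → Set (ℕ × ℕ)) (lam : Fin (m + 1) → ℂ)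
    (hstd : ∀ j, IsStandardSet (Δ j)) (hfin : ∀ j, (Δ j).Finite)
    (hcolen : ∀ j, FiniteDimensional ℂ (MvPolynomial (Fin 2) ℂ ⧸ I j))
    (hin : ∀ j, leadSet (I j) = (Δ j)ᶜ)
    (hsupp : ∀ j, zeroSet (I j) = {(lam j, 0)})
    (hdist : Function.Injective lam) :
    leadSet (⨅ j, I j) =
      {α : ℕ × ℕ | α.1 < ∑ j, ({β ∈ Δ j | β.2 = α.2}).ncard}ᶜ := by
  exact stmt13_general I Δ hfin hin (by simp [hsupp])
    fun i j hij => by simpa [Function.onFun, hsupp] using hdist.ne hij
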